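/- Consider any run of the multi-level quota method (with arbitrary tie-breaking) on a multi-level apportionment instance. Whenever a node c with parent p has just received a seat — that is, for any g ≥ 1 such that c is among the recipients of the g-th seat — the resulting allocation V^g after g seats satisfies V^g_c / R_c ≥ V^g_p / R_p. -/

import Mathlib

/-- A multi-level apportionment instance: a rooted tree on nodes `0, …, n`
(root `0`, encoded by a parent function with `parent i < i` for `i ≠ 0`),
together with entitlements `W`. -/
structure MLA where
  n : ℕ
  parent : Fin (n + 1) → Fin (n + 1)
  parent_lt : ∀ i : Fin (n + 1), i ≠ 0 → (parent i : ℕ) < (i : ℕ)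
  W : Fin (n + 1) → ℝ
  W_pos : ∀ i, 0 < W i
  W_le_one : ∀ i, W i ≤ 1
  W_root : W 0 = 1
  W_sum : ∀ i : Fin (n + 1),
    (Finset.univ.filter (fun c => c ≠ 0 ∧ parent c = i)).Nonempty →
    ∑ c ∈ Finset.univ.filter (fun c => c ≠ 0 ∧ parent c = i), W c = 1

namespace MLA

variable (T : MLA)

/-- The set of children of node `i`. -/
def children (i : Fin (T.n + 1)) : Finset (Fin (T.n + 1)) :=
  Finset.univ.filter (fun c => c ≠ 0 ∧ T.parent c = i)

/-- The ancestor set `A(i)`: `A(0) = {0}` and `A(i) = {parent i} ∪ A(parent i)`. -/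
def ancestors (i : Fin (T.n + 1)) : Finset (Fin (T.n + 1)) :=
  if h : i = 0 then {0} else insert (T.parent i) (ancestors (T.parent i))
termination_by (i : ℕ)
decreasing_by exact T.parent_lt i h

/-- The entitlement of node `i` relative to the root: `R i = ∏_{a ∈ A(i) ∪ {i}} W a`. -/
def R (i : Fin (T.n + 1)) : ℝ := ∏ a ∈ insert i (T.ancestors i), T.W a

/-- `V` is an allocation of `h` seats. -/
def IsAlloc (h : ℕ) (V : Fin (T.n + 1) → ℕ) : Prop :=
  V 0 = h ∧ ∀ i, (T.children i).Nonempty → V i = ∑ c ∈ T.children i, V c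

/-- `V` fulfills lower quota: `V i ≥ LQ i = max_{a ∈ A(i)} ⌊(R i / R a) · V a⌋`. -/
def FulfillsLowerQuota (V : Fin (T.n + 1) → ℕ) : Prop :=
  ∀ i, ∀ a ∈ T.ancestors i, ⌊T.R i / T.R a * (V a : ℝ)⌋ ≤ (V i : ℤ)

/-- `V` fulfills upper quota: `V i ≤ UQ i = min_{a ∈ A(i)} ⌈(R i / R a) · V a⌉`. -/
def FulfillsUpperQuota (V : Fin (T.n + 1) → ℕ) : Prop :=
  ∀ i, ∀ a ∈ T.ancestors i, (V i : ℤ) ≤ ⌈T.R i / T.R a * (V a : ℝ)⌉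


/-- `P` is the set of nodes receiving the new seat in one step of an iterative
method with selection criterion `crit` (to be minimized among children) and
eligibility constraint `elig`: `P` is a root-to-leaf path, each non-root node on
the path is an eligible child of its parent minimizing `crit` among all eligible
children, and the seat counts along `P` each increase by one. -/
def IsStepWith (crit : (Fin (T.n + 1) → ℕ) → Fin (T.n + 1) → ℝ)
    (elig : (Fin (T.n + 1) → ℕ) → Fin (T.n + 1) → Prop)
    (P : Finset (Fin (T.n + 1))) (Vh Vh1 : Fin (T.n + 1) → ℕ) : Prop :=
  (0 : Fin (T.n + 1)) ∈ P ∧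
  (∀ i ∈ P, i ≠ 0 → T.parent i ∈ P) ∧
  (∀ i ∈ P, (T.children i).Nonempty → ∃ c ∈ T.children i, c ∈ P) ∧
  (∀ c ∈ P, ∀ d ∈ P, c ≠ 0 → d ≠ 0 → T.parent c = T.parent d → c = d) ∧
  (∀ c ∈ P, c ≠ 0 → elig Vh c ∧
    ∀ d ∈ T.children (T.parent c), elig Vh d → crit Vh c ≤ crit Vh d) ∧
  (∀ i, Vh1 i = Vh i + if i ∈ P then 1 else 0)

/-- `V : ℕ → (nodes → ℕ)` is a run of the iterative method given by `crit` and
`elig` (with arbitrary tie-breaking): `V 0` is the all-zero allocation and each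
`V (h+1)` is obtained from `V h` by allocating one more seat along a path. -/
def IsRun (crit : (Fin (T.n + 1) → ℕ) → Fin (T.n + 1) → ℝ)
    (elig : (Fin (T.n + 1) → ℕ) → Fin (T.n + 1) → Prop)
    (V : ℕ → Fin (T.n + 1) → ℕ) : Prop :=
  (∀ i, V 0 i = 0) ∧ ∀ h, ∃ P, T.IsStepWith crit elig P (V h) (V (h + 1))

/-- Adams' criterion: a child `c` minimizing `V c / R c` receives the seat. -/
noncomputable def adamsCrit (V : Fin (T.n + 1) → ℕ) (c : Fin (T.n + 1)) : ℝ :=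
  (V c : ℝ) / T.R c

/-- Jefferson's criterion: a child `c` minimizing `(V c + 1) / R c` receives the seat. -/
noncomputable def jeffersonCrit (V : Fin (T.n + 1) → ℕ) (c : Fin (T.n + 1)) : ℝ :=
  ((V c : ℝ) + 1) / T.R c

/-- Trivial eligibility constraint: every child is eligible. -/
def trivElig (_ : Fin (T.n + 1) → ℕ) (_ : Fin (T.n + 1)) : Prop := True

/-- Eligibility constraint of the quota method: `V c / W c < V (parent c) + 1`. -/
def quotaElig (V : Fin (T.n + 1) → ℕ) (c : Fin (T.n + 1)) : Prop :=
  (V c : ℝ) / T.W c < (V (T.parent c) : ℝ) + 1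

/-- Eligibility constraint of the upper-compliant quota method:
`V c / R c < (V a + 1) / R a` for every ancestor `a` of `c`. -/
def ucElig (V : Fin (T.n + 1) → ℕ) (c : Fin (T.n + 1)) : Prop :=
  ∀ a ∈ T.ancestors c, (V c : ℝ) / T.R c < ((V a : ℝ) + 1) / T.R a

end MLA

namespace MLA

theorem anc_le (T : MLA) (m : ℕ) : ∀ i : Fin (T.n + 1), (i : ℕ) = m →
    ∀ a ∈ T.ancestors i, (a : ℕ) ≤ i := by
  induction m using Nat.strong_induction_on with
  | _ m ih =>
    intro i hi a ha
    rw [ancestors] at ha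
    split_ifs at ha with h
    · simp at ha; subst ha; simp
    · have hl := T.parent_lt i h
      rcases Finset.mem_insert.1 ha with rfl | ha
      · exact hl.le
      · have := ih _ (hi ▸ hl) (T.parent i) rfl a ha
        omega

theorem R_pos (T : MLA) (i : Fin (T.n + 1)) : 0 < T.R i :=
  Finset.prod_pos fun a _ => T.W_pos a

theorem R_parent (T : MLA) (c : Fin (T.n + 1)) (hc : c ≠ 0) :
    T.R c = T.W c * T.R (T.parent c) := by
  have hl := T.parent_lt c hc
  unfold R
  have h1 : T.ancestors c = insert (T.parent c) (T.ancestors (T.parent c)) := by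
    rw [ancestors]; simp [hc]
  rw [h1, Finset.prod_insert]
  intro hm
  rcases Finset.mem_insert.1 hm with h | h
  · rw [← h] at hl; exact lt_irrefl _ hl
  · have := T.anc_le _ _ rfl _ h
    omega

theorem mem_children (T : MLA) (c p : Fin (T.n + 1)) :
    c ∈ T.children p ↔ c ≠ 0 ∧ T.parent c = p := by
  simp [children]

theorem run_alloc (T : MLA) (V : ℕ → Fin (T.n + 1) → ℕ)
    (hrun : T.IsRun T.jeffersonCrit T.quotaElig V) (t : ℕ) (p : Fin (T.n + 1))
    (hp : (T.children p).Nonempty) : V t p = ∑ c ∈ T.children p, V t c := by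
  induction t with
  | zero => simp [hrun.1]
  | succ t ih =>
    obtain ⟨P, -, hpar, hch, huniq, -, hV⟩ := hrun.2 t
    simp_rw [hV, Finset.sum_add_distrib, ← ih]
    congr 1
    by_cases hpP : p ∈ P
    · obtain ⟨c, hc, hcP⟩ := hch p hpP hp
      rw [if_pos hpP, Finset.sum_eq_single_of_mem c hc]
      · simp [hcP]
      · intro b hb hbc
        rw [if_neg]
        intro hbP
        rw [mem_children] at hb hc
        exact hbc (huniq b hbP c hcP hb.1 hc.1 (hb.2.trans hc.2.symm))
    · rw [if_neg hpP, Finset.sum_eq_zero]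
      intro b hb
      rw [mem_children] at hb
      rw [if_neg]
      intro hbP
      exact hpP (hb.2 ▸ hpar b hbP hb.1)

theorem run_mono (T : MLA) (V : ℕ → Fin (T.n + 1) → ℕ)
    (hrun : T.IsRun T.jeffersonCrit T.quotaElig V) (i : Fin (T.n + 1)) :
    Monotone (fun t => V t i) := by
  apply monotone_nat_of_le_succ
  intro t
  obtain ⟨P, -, -, -, -, -, hV⟩ := hrun.2 t
  simp [hV]

/-- Summation over the children of `p`: the common contradiction. -/
theorem sum_contra (T : MLA) (p c : Fin (T.n + 1)) (hc : c ∈ T.children p)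
    (f : Fin (T.n + 1) → ℝ) (x : ℝ) (hf : ∀ e ∈ T.children p, f e ≤ T.W e * x)
    (hfc : f c < T.W c * x - 1) : ∑ e ∈ T.children p, f e < x - 1 := by
  have hW : ∑ e ∈ T.children p, T.W e = 1 := T.W_sum p ⟨c, hc⟩
  have h : ∑ e ∈ T.children p, f e < ∑ e ∈ T.children p, (T.W e * x - if e = c then 1 else 0) := by
    apply Finset.sum_lt_sum
    · intro e he
      split_ifs with h
      · subst h; exact hfc.le
      · simpa using hf e he
    · exact ⟨c, hc, by simpa using hfc⟩
  rw [Finset.sum_sub_distrib, ← Finset.sum_mul, hW] at h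
  simpa [hc] using h

theorem run_lower (T : MLA) (V : ℕ → Fin (T.n + 1) → ℕ)
    (hrun : T.IsRun T.jeffersonCrit T.quotaElig V) (G : ℕ) (p c : Fin (T.n + 1))
    (hc : c ∈ T.children p) :
    T.W c * ((V G p : ℝ) + 1) ≤ (V G c : ℝ) + 1 := by
  classical
  by_contra! hbad
  set b : ℝ := (V G p : ℝ) + 1 with hb
  have hb0 : 0 < b := by positivity
  have hall : ∀ t, (V t p : ℝ) = ∑ e ∈ T.children p, (V t e : ℝ) := fun t => by
    exact_mod_cast T.run_alloc V hrun t p ⟨c, hc⟩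
  have hex : ∃ m, ∀ d ∈ T.children p, T.W d * b ≤ (V G d : ℝ) → V G d ≤ V m d :=
    ⟨G, fun _ _ _ => le_rfl⟩
  have hmG : Nat.find hex ≤ G := Nat.find_min' hex fun _ _ _ => le_rfl
  have hm := Nat.find_spec hex
  have hmin := fun k => @Nat.find_min _ _ hex k
  generalize Nat.find hex = m at hmG hm hmin
  rcases m with _ | k
  · have h1 := T.sum_contra p c hc (fun e => (V G e : ℝ)) b (fun e he => ?_) (by simpa using by linarith)
    · rw [← hall] at h1; linarith
    · by_contra! h
      have h2 := hm e he h.le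
      rw [hrun.1] at h2
      have h3 : V G e = 0 := by omega
      have := mul_pos (T.W_pos e) hb0
      simp [h3] at h
      linarith
  · have hk := hmin k (Nat.lt_succ_self k)
    push Not at hk
    obtain ⟨d, hd, hdb, hdlt⟩ := hk
    have hdm := hm d hd hdb
    obtain ⟨P, -, hpar, -, -, hcrit, hV⟩ := hrun.2 k
    have hdP : d ∈ P := by
      by_contra h
      have := hV d
      simp [h] at this
      omega
    have hd' := (T.mem_children d p).1 hd
    have hpP : p ∈ P := hd'.2 ▸ hpar d hdP hd'.1
    have hVp : (V (k+1) p : ℝ) = V k p + 1 := by rw [hV p]; simp [hpP]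
    have hVd : V (k+1) d = V k d + 1 := by rw [hV d]; simp [hdP]
    have helig : ∀ e ∈ T.children p, T.quotaElig (V k) e → T.W e * b ≤ (V k e : ℝ) + 1 := by
      intro e he hel
      have he' := (T.mem_children e p).1 he
      have h1 := (hcrit d hdP hd'.1).2 e (by rw [hd'.2]; exact he) hel
      unfold jeffersonCrit at h1
      rw [T.R_parent d hd'.1, T.R_parent e he'.1, hd'.2, he'.2,
        ← div_div, ← div_div, div_le_div_iff_of_pos_right (T.R_pos p),
        div_le_div_iff₀ (T.W_pos d) (T.W_pos e)] at h1
      have h2 : T.W d * b ≤ (V k d : ℝ) + 1 := by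
        refine hdb.trans ?_
        exact_mod_cast hdm.trans hVd.le
      have h3 : T.W d * b * T.W e ≤ ((V k d : ℝ) + 1) * T.W e :=
        mul_le_mul_of_nonneg_right h2 (T.W_pos e).le
      have h4 : T.W d * (T.W e * b) ≤ T.W d * ((V k e : ℝ) + 1) := by linarith
      exact le_of_mul_le_mul_left h4 (T.W_pos d)
    have hinel : ∀ e ∈ T.children p, ¬ T.quotaElig (V k) e →
        T.W e * ((V k p : ℝ) + 1) ≤ V (k+1) e := by
      intro e he hel
      have he' := (T.mem_children e p).1 he
      unfold quotaElig at hel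
      rw [he'.2, not_lt, le_div_iff₀ (T.W_pos e)] at hel
      have : (V k e : ℝ) ≤ V (k+1) e := by
        exact_mod_cast T.run_mono V hrun e (Nat.le_succ k)
      linarith
    have hab : (V k p : ℝ) + 1 ≤ b := by
      have : (V (k+1) p : ℝ) ≤ V G p := by exact_mod_cast T.run_mono V hrun p hmG
      linarith
    have h1 := T.sum_contra p c hc (fun e => (V G e : ℝ) - V (k+1) e) (b - (V k p + 1)) ?_ ?_
    · rw [Finset.sum_sub_distrib, ← hall, ← hall] at h1
      linarith
    · intro e he
      have hnn : 0 ≤ T.W e * (b - (V k p + 1)) := mul_nonneg (T.W_pos e).le (by linarith)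
      by_cases hS : T.W e * b ≤ (V G e : ℝ)
      · have : (V G e : ℝ) ≤ V (k+1) e := by exact_mod_cast hm e he hS
        linarith
      · by_cases hel : T.quotaElig (V k) e
        · have h2 := helig e he hel
          have h3 : (V G e : ℝ) < (V k e : ℝ) + 1 := by linarith
          have h4 : V G e ≤ V k e := by
            have : V G e < V k e + 1 := by exact_mod_cast h3
            omega
          have : (V G e : ℝ) ≤ V (k+1) e := by
            exact_mod_cast h4.trans (T.run_mono V hrun e (Nat.le_succ k))
          linarith
        · have := hinel e he hel
          rw [mul_sub]; linarith
    · by_cases hel : T.quotaElig (V k) c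
      · have h2 := helig c hc hel
        have : (V k c : ℝ) ≤ V G c := by
          exact_mod_cast T.run_mono V hrun c ((Nat.le_succ k).trans hmG)
        linarith
      · have := hinel c hc hel
        rw [mul_sub]; linarith

end MLA

/-- In any run of the multi-level quota method, whenever a
non-root node `c` (with parent `p`) has just received the `g`-th seat (`g ≥ 1`,
`c` among the recipients `P` of that seat), the resulting allocation satisfies
`V^g_c / R_c ≥ V^g_p / R_p`. -/
theorem quota_method_just_received_ratio (T : MLA) (V : ℕ → Fin (T.n + 1) → ℕ)
    (hrun : T.IsRun T.jeffersonCrit T.quotaElig V) (g : ℕ) (hg : 1 ≤ g)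
    (P : Finset (Fin (T.n + 1)))
    (hP : T.IsStepWith T.jeffersonCrit T.quotaElig P (V (g - 1)) (V g))
    (c : Fin (T.n + 1)) (hc : c ∈ P) (hc0 : c ≠ 0) :
    (V g (T.parent c) : ℝ) / T.R (T.parent c) ≤ (V g c : ℝ) / T.R c := by
  classical
  have hc' : c ∈ T.children (T.parent c) := (T.mem_children _ _).2 ⟨hc0, rfl⟩
  have h := T.run_lower V hrun (g - 1) _ c hc'
  obtain ⟨-, hpar, -, -, -, hV⟩ := hP
  have h1 : (V g c : ℝ) = V (g - 1) c + 1 := by rw [hV c]; simp [hc]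
  have h2 : (V g (T.parent c) : ℝ) = V (g - 1) (T.parent c) + 1 := by
    rw [hV]; simp [hpar c hc hc0]
  rw [h1, h2, T.R_parent c hc0, ← div_div, div_le_div_iff_of_pos_right (T.R_pos _),
    le_div_iff₀ (T.W_pos c)]
  linarith
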